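/- Fourier transform of the Poisson-type integral: Let f ∈ 𝒮(ℝ^d; ℝ^d) be a Schwartz vector field, set F = (f, 0) : ℝ^d → ℝ^{d+1}, and let U(x,t) = (ℙ_t ∗ F)(x). Then for every t > 0 and every ξ ∈ ℝ^d with ξ ≠ 0: (i) for each j = 1, …, d, ℱ_x(U_j(·,t))(ξ) = e^{−2π|ξ|t} ℱ(f_j)(ξ) − 2π t e^{−2π|ξ|t} (ξ_j/|ξ|) ((ξ/|ξ|) · ℱ(f)(ξ)) |ξ|, i.e. ℱ_x(U_j(·,t))(ξ) = e^{−2π|ξ|t} ℱ(f_j)(ξ) − 2π t e^{−2π|ξ|t} ξ_j (ξ · ℱ(f)(ξ))/|ξ|; and (ii) ℱ_x(U_{d+1}(·,t))(ξ) = −2πi t e^{−2π|ξ|t} (ξ · ℱ(f)(ξ)). -/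

import Mathlib

open MeasureTheory Filter Set
open scoped ENNReal NNReal Topology

noncomputable section

abbrev Ed (d : ℕ) : Type := EuclideanSpace ℝ (Fin d)

/-- The surface measure `ω_d` of the unit sphere in `ℝ^{d+1}`. -/
def sphereVol (d : ℕ) : ℝ :=
  ((d : ℝ) + 1) * (volume (Metric.ball (0 : EuclideanSpace ℝ (Fin (d+1))) 1)).toReal

/-- The Poisson kernel `p_t(x)` for the upper half-space `ℝ^d × (0,∞)`. -/
def poissonKernelEd (d : ℕ) (t : ℝ) (x : Ed d) : ℝ :=
  (2 / sphereVol d) * t / (‖x‖ ^ 2 + t ^ 2) ^ (((d : ℝ) + 1) / 2)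

/-- The (componentwise) Poisson integral `u(x,t) = (p_t ∗ f)(x)` of a vector field. -/
def poissonInt (d m : ℕ) (f : Ed d → Ed m) (x : Ed d) (t : ℝ) : Ed m :=
  ∫ y, poissonKernelEd d t y • f (x - y)

/-- The vector `(x, t) ∈ ℝ^{d+1}`. -/
def snocVec (d : ℕ) (x : Ed d) (t : ℝ) : Fin (d + 1) → ℝ := Fin.snoc (fun i => x i) t

/-- The entries `𝔭_t^{jk}(x)` of the Poisson-type matrix kernel `ℙ_t`. -/
def pEntry (d : ℕ) (t : ℝ) (j k : Fin (d + 1)) (x : Ed d) : ℝ :=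
  (2 * ((d : ℝ) + 1) / sphereVol d) * t * snocVec d x t j *
    snocVec d x t k / (‖x‖ ^ 2 + t ^ 2) ^ (((d : ℝ) + 3) / 2)

/-- The Poisson-type integral `U(x,t) = (ℙ_t ∗ F)(x)`, the convolution taken in the sense of
matrix–vector multiplication. -/
def pConv (d : ℕ) (t : ℝ) (F : Ed d → Ed (d + 1)) (x : Ed d) : Ed (d + 1) :=
  (EuclideanSpace.equiv (Fin (d + 1)) ℝ).symm
    (fun i => ∫ y, ∑ j, pEntry d t i j y * F (x - y) j)

/-- The field `F = (f, 0) : ℝ^d → ℝ^{d+1}` obtained by appending a zero component. -/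
def appendZero (d : ℕ) (f : Ed d → Ed d) : Ed d → Ed (d + 1) :=
  fun y => (EuclideanSpace.equiv (Fin (d + 1)) ℝ).symm (Fin.snoc (fun i => f y i) 0)

/-- The Fourier transform `ℱ(g)(ξ) = ∫_{ℝ^d} e^{−2πi ξ·x} g(x) dx` of a real-valued function. -/
def ftR (d : ℕ) (g : Ed d → ℝ) (ξ : Ed d) : ℂ :=
  ∫ x, Complex.exp (((-2 * Real.pi * (inner ℝ ξ x : ℝ) : ℝ) : ℂ) * Complex.I) * (g x : ℂ)

/-! On `Ed d` the Poisson kernel `p_t = poissonKernelEd d t` satisfies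
`∂_k p_t = -(d + 1) p_t x_k / (|x|² + t²)`, hence `𝔭_t^{ik} = -(x, t)_i ∂_k p_t` for `k ≤ d`.
Since `ℱ p_t (ξ) = e^{-2πt|ξ|}`, and `ℱ` turns `∂_k` into multiplication by `2πi ξ_k` and
multiplication by `x_j` into `(i / 2π) ∂_j`, the entries of `ℙ_t` have transforms
`-2πi t ξ_k e^{-2πt|ξ|}` (last row) and `∂_j (ξ_k e^{-2πt|ξ|})` (other rows); the convolution
theorem does the rest.

The transform of `p_t` is found by subordination:
`(|x|² + t²)^{-(d+1)/2}` is a superposition over `v > 0` of the Gaussians `v^d e^{-(|x|² + t²) v²}`,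
and superposing their transforms leaves the integral of `e^{-t²v² - a²/v²}` with `a = π|ξ|`, which
the substitution `y = t v - a / v` reduces to a Gaussian one. -/

section

open Module
open scoped FourierTransform RealInnerProductSpace Real Convolution

/-- The inverse of the bijection `w ↦ w - c / w` from `(0, ∞)` onto `ℝ`, namely the positive root
`w` of `w ^ 2 - y * w - c = 0`. -/
def subDivInv (c y : ℝ) : ℝ := (y + √(y ^ 2 + 4 * c)) / 2

lemma subDivInv_pos {c : ℝ} (hc : 0 < c) (y : ℝ) : 0 < subDivInv c y := by
  have hy : |y| < √(y ^ 2 + 4 * c) := Real.lt_sqrt_of_sq_lt (by rw [sq_abs]; linarith)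
  unfold subDivInv
  linarith [neg_abs_le y]

lemma subDivInv_sub_div {c : ℝ} (hc : 0 < c) (y : ℝ) :
    subDivInv c y - c / subDivInv c y = y := by
  have hroot : subDivInv c y ^ 2 - y * subDivInv c y - c = 0 := by
    unfold subDivInv
    linear_combination (1 / 4) * Real.sq_sqrt (show 0 ≤ y ^ 2 + 4 * c by positivity)
  have hpos := subDivInv_pos hc y
  field_simp
  linear_combination hroot

lemma subDivInv_apply_sub_div {c w : ℝ} (hc : 0 < c) (hw : 0 < w) :
    subDivInv c (w - c / w) = w := by
  have hsq : (w - c / w) ^ 2 + 4 * c = (w + c / w) ^ 2 := by field_simp; ring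
  rw [subDivInv, hsq, Real.sqrt_sq (by positivity)]
  ring

lemma range_subDivInv {c : ℝ} (hc : 0 < c) : range (subDivInv c) = Ioi 0 :=
  Subset.antisymm (range_subset_iff.2 (subDivInv_pos hc))
    fun w hw => ⟨w - c / w, subDivInv_apply_sub_div hc hw⟩

lemma hasDerivAt_subDivInv {c : ℝ} (hc : 0 < c) (y : ℝ) :
    HasDerivAt (subDivInv c) ((1 + y / √(y ^ 2 + 4 * c)) / 2) y := by
  have hsqrt : HasDerivAt (fun y => √(y ^ 2 + 4 * c)) (y / √(y ^ 2 + 4 * c)) y := by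
    refine (((hasDerivAt_pow 2 y).add_const (4 * c)).sqrt (by positivity)).congr_deriv ?_
    simp only [Nat.cast_ofNat, Nat.add_one_sub_one, pow_one]
    exact mul_div_mul_left _ _ two_ne_zero
  exact ((hasDerivAt_id y).add hsqrt).div_const 2

lemma abs_div_sqrt_sq_add_le_one {c : ℝ} (hc : 0 ≤ c) (y : ℝ) : |y / √(y ^ 2 + c)| ≤ 1 := by
  rw [abs_div, abs_of_nonneg (Real.sqrt_nonneg _)]
  exact div_le_one_of_le₀ (Real.abs_le_sqrt (by linarith)) (Real.sqrt_nonneg _)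

lemma integral_eq_zero_of_odd {E : Type*} [NormedAddCommGroup E] [NormedSpace ℝ E] {f : ℝ → E}
    (hf : f.Odd) : ∫ y, f y = 0 := by
  have h : ∫ y, f y = -∫ y, f y := by
    rw [← integral_neg, ← integral_neg_eq_self]
    exact integral_congr_ae (Eventually.of_forall hf)
  have : IsAddTorsionFree E := .of_isTorsionFree ℝ E
  exact self_eq_neg.1 h

-- The odd part of the Jacobian of `subDivInv c` does not contribute against an even function.
lemma integral_Ioi_comp_sub_div {E : Type*} [NormedAddCommGroup E] [NormedSpace ℝ E]
    {f : ℝ → E} (hf : Integrable f) (heven : f.Even) {c : ℝ} (hc : 0 < c) :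
    ∫ w in Ioi 0, f (w - c / w) = (1 / 2 : ℝ) • ∫ y, f y := by
  set odd : ℝ → E := fun y => (y / √(y ^ 2 + 4 * c)) • f y
  have hodd : odd.Odd := fun y => by
    simp only [odd, heven y, neg_sq, neg_div, neg_smul]
  have hodd_int : Integrable odd :=
    hf.bdd_smul 1 (by fun_prop : Measurable _).aestronglyMeasurable
      (Eventually.of_forall (abs_div_sqrt_sq_add_le_one (by positivity)))
  have hinj : InjOn (subDivInv c) univ :=
    (Function.LeftInverse.injective (g := fun w => w - c / w) (subDivInv_sub_div hc)).injOn
  have hjac (y : ℝ) : |(1 + y / √(y ^ 2 + 4 * c)) / 2| • f y = (1 / 2 : ℝ) • (f y + odd y) := by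
    have hle := (abs_le.1 (abs_div_sqrt_sq_add_le_one (show 0 ≤ 4 * c by positivity) y)).1
    rw [abs_of_nonneg (by linarith)]
    module
  rw [← range_subDivInv hc, ← image_univ, integral_image_eq_integral_abs_deriv_smul
    MeasurableSet.univ (fun y _ => (hasDerivAt_subDivInv hc y).hasDerivWithinAt) hinj]
  simp only [subDivInv_sub_div hc, hjac, setIntegral_univ]
  rw [integral_smul, integral_add hf hodd_int, integral_eq_zero_of_odd hodd, add_zero]

lemma integral_Ioi_exp_neg_mul_sq_add_div_sq {t a : ℝ} (ht : 0 < t) (ha : 0 ≤ a) :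
    ∫ v in Ioi 0, rexp (-(t ^ 2 * v ^ 2 + a ^ 2 / v ^ 2)) = √π / (2 * t) * rexp (-(2 * a * t)) := by
  rcases ha.eq_or_lt with rfl | ha
  · have h := integral_gaussian_Ioi (t ^ 2)
    rw [Real.sqrt_div Real.pi_nonneg, Real.sqrt_sq ht.le] at h
    simpa [neg_mul, div_div, mul_comm t 2] using h
  have hgauss : Integrable fun y : ℝ => rexp (-y ^ 2) := by
    simpa using integrable_exp_neg_mul_sq one_pos
  have hsquare : ∀ v ∈ Ioi (0 : ℝ), rexp (-(t ^ 2 * v ^ 2 + a ^ 2 / v ^ 2)) =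
      rexp (-(2 * a * t)) * rexp (-(t * v - a * t / (t * v)) ^ 2) := fun v (hv : 0 < v) => by
    rw [← Real.exp_add]
    congr 1
    field_simp
    ring
  rw [setIntegral_congr_fun measurableSet_Ioi hsquare, integral_const_mul,
    integral_comp_mul_left_Ioi (fun w => rexp (-(w - a * t / w) ^ 2)) 0 ht, mul_zero,
    integral_Ioi_comp_sub_div hgauss (fun y => by rw [neg_sq]) (mul_pos ha ht),
    show ∫ y : ℝ, rexp (-y ^ 2) = √π by simpa using integral_gaussian 1]
  simp only [smul_eq_mul]
  field_simp

section FourierTransform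

variable {V E : Type*} [NormedAddCommGroup V] [InnerProductSpace ℝ V] [MeasurableSpace V]
  [BorelSpace V] [FiniteDimensional ℝ V] [NormedAddCommGroup E] [NormedSpace ℂ E]

lemma fourier_integral_eq_integral_fourier {α : Type*} [MeasurableSpace α] {μ : Measure α}
    [SFinite μ] {K : V → α → E} (hK : Integrable (Function.uncurry K) (volume.prod μ)) (ξ : V) :
    𝓕 (fun x => ∫ a, K x a ∂μ) ξ = ∫ a, 𝓕 (fun x => K x a) ξ ∂μ := by
  have hchar : Integrable (Function.uncurry fun x a => (𝐞 (-⟪x, ξ⟫) : ℂ) • K x a)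
      (volume.prod μ) := by
    refine hK.norm.mono' (.smul ?_ hK.1) (Eventually.of_forall fun p => ?_)
    · have hcont : Continuous fun x : V => (𝐞 (-⟪x, ξ⟫) : ℂ) := by fun_prop
      exact (hcont.measurable.comp measurable_fst).aestronglyMeasurable
    · exact (Circle.norm_smul (𝐞 (-⟪p.1, ξ⟫)) (K p.1 p.2)).le
  simp only [Real.fourier_eq, Circle.smul_def]
  rw [← integral_integral_swap hchar]
  simp only [integral_smul]

lemma fourier_const_smul (r : ℂ) (f : V → E) (ξ : V) :
    𝓕 (fun x => r • f x) ξ = r • 𝓕 f ξ :=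
  congr_fun (VectorFourier.fourierIntegral_const_smul 𝐞 volume (innerₗ V) f r) ξ

lemma fourier_fderiv_apply {f : V → E} (hf : Integrable f) (hdiff : Differentiable ℝ f)
    (hf' : Integrable (fderiv ℝ f)) (v ξ : V) :
    𝓕 (fun x => fderiv ℝ f x v) ξ = (2 * π * Complex.I * ⟪v, ξ⟫) • 𝓕 f ξ := by
  rw [← Real.fourier_continuousLinearMap_apply hf', Real.fourier_fderiv hf hdiff hf']
  simp only [VectorFourier.fourierSMulRight_apply, neg_apply, innerSL_apply_apply ℝ,
    real_inner_comm, ← Complex.coe_smul]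
  module

lemma fourier_inner_smul {f : V → E} (hf : Integrable f) (hf' : Integrable fun x => ‖x‖ * ‖f x‖)
    (v ξ : V) :
    𝓕 (fun x => ⟪v, x⟫ • f x) ξ = (Complex.I / (2 * π)) • fderiv ℝ (𝓕 f) ξ v := by
  have hint : Integrable (VectorFourier.fourierSMulRight (innerSL ℝ) f) := by
    refine (hf'.const_mul (2 * π)).mono' hf.1.fourierSMulRight (Eventually.of_forall fun x => ?_)
    rw [VectorFourier.norm_fourierSMulRight, innerSL_apply_norm, mul_assoc]
  rw [Real.fderiv_fourier hf hf', Real.fourier_continuousLinearMap_apply hint]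
  simp only [VectorFourier.fourierSMulRight_apply, innerSL_apply_apply ℝ, Real.fourier_eq]
  rw [← integral_smul]
  congr 1 with x
  simp only [Circle.smul_def, ← Complex.coe_smul, smul_smul, real_inner_comm]
  congr 1
  field_simp
  linear_combination (⟪v, x⟫ : ℂ) * Complex.I_sq

lemma fourier_integral_sum_mul {ι : Type*} [Fintype ι] {K G : ι → V → ℂ}
    (hK : ∀ k, Integrable (K k)) (hG : ∀ k, Integrable (G k)) (ξ : V) :
    𝓕 (fun x => ∫ y, ∑ k, K k y * G k (x - y)) ξ = ∑ k, 𝓕 (K k) ξ * 𝓕 (G k) ξ := by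
  let L := ContinuousLinearMap.mul ℂ ℂ
  have hexists : ∀ᵐ x, ∀ k, ConvolutionExistsAt (K k) (G k) x L :=
    ae_all_iff.2 fun k => (hK k).ae_convolution_exists L (hG k)
  have hsum : (fun x => ∫ y, ∑ k, K k y * G k (x - y)) =ᵐ[volume]
      fun x => ∑ k, (K k ⋆[L] G k) x :=
    hexists.mono fun x hx => integral_finsetSum _ fun k _ => hx k
  rw [Real.fourier_eq, integral_congr_ae (hsum.mono fun x hx => congrArg (𝐞 (-⟪x, ξ⟫) • ·) hx)]
  simp only [Finset.smul_sum]
  rw [integral_finsetSum _ fun k _ => (Real.fourierIntegral_convergent_iff ξ).2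
    ((hK k).integrable_convolution L (hG k))]
  exact Finset.sum_congr rfl fun k _ => Real.fourier_mul_convolution_eq (hK k) (hG k) ξ

end FourierTransform

section Subordination

variable {V : Type*} [NormedAddCommGroup V] [InnerProductSpace ℝ V] [MeasurableSpace V]
  [BorelSpace V] [FiniteDimensional ℝ V]

lemma integral_Ioi_pow_mul_exp_neg_mul_sq {q : ℝ} (hq : 0 < q) (n : ℕ) :
    ∫ v in Ioi 0, v ^ n * rexp (-(q * v ^ 2)) =
      Real.Gamma ((n + 1) / 2) / 2 * q ^ (-(((n : ℝ) + 1) / 2)) := by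
  have hn : (-1 : ℝ) < n := by linarith [n.cast_nonneg (α := ℝ)]
  have h := integral_rpow_mul_exp_neg_mul_rpow two_pos hn hq
  simp only [Real.rpow_natCast, Real.rpow_two, neg_mul] at h
  rw [h, neg_div]
  ring

lemma rpow_div_sq_eq {v c : ℝ} (hv : 0 < v) (hc : 0 ≤ c) (n : ℕ) :
    (c / v ^ 2) ^ ((n : ℝ) / 2) = c ^ ((n : ℝ) / 2) / v ^ n := by
  rw [Real.div_rpow hc (by positivity), ← Real.rpow_two, ← Real.rpow_mul hv.le,
    mul_div_cancel₀ _ two_ne_zero, Real.rpow_natCast]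

lemma integrable_exp_neg_mul_sq_norm {b : ℝ} (hb : 0 < b) :
    Integrable fun x : V => rexp (-(b * ‖x‖ ^ 2)) := by
  have h := GaussianFourier.integrable_cexp_neg_mul_sq_norm_add (V := V) (b := b) (by simpa) 0 0
  refine h.re.congr (Eventually.of_forall fun x => ?_)
  simp [← Complex.ofReal_pow, ← Complex.ofReal_mul, ← Complex.ofReal_neg, Complex.exp_ofReal_re]

lemma fourier_exp_neg_sq_mul_sq_norm {v : ℝ} (hv : 0 < v) (ξ : V) :
    𝓕 (fun x : V => (rexp (-(v ^ 2 * ‖x‖ ^ 2)) : ℂ)) ξ =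
      (π ^ ((finrank ℝ V : ℝ) / 2) / v ^ finrank ℝ V * rexp (-((π * ‖ξ‖) ^ 2 / v ^ 2)) : ℝ) := by
  have h := fourier_gaussian_innerProductSpace (V := V) (b := ((v ^ 2 : ℝ) : ℂ))
    (by rw [Complex.ofReal_re]; positivity) ξ
  rw [← rpow_div_sq_eq hv Real.pi_nonneg, Complex.ofReal_mul, Complex.ofReal_cpow (by positivity)]
  push_cast at h ⊢
  convert h using 3
  · ring_nf
  · ring_nf

section

variable (V)

lemma integrable_pow_mul_exp_neg_mul_sq {t : ℝ} (ht : 0 < t) :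
    Integrable (Function.uncurry fun (x : V) (v : ℝ) =>
      v ^ finrank ℝ V * rexp (-((‖x‖ ^ 2 + t ^ 2) * v ^ 2)))
      (volume.prod (volume.restrict (Ioi 0))) := by
  have hslice (x : V) (v : ℝ) : v ^ finrank ℝ V * rexp (-((‖x‖ ^ 2 + t ^ 2) * v ^ 2)) =
      v ^ finrank ℝ V * rexp (-(t ^ 2 * v ^ 2)) * rexp (-(v ^ 2 * ‖x‖ ^ 2)) := by
    rw [mul_assoc, ← Real.exp_add]
    ring_nf
  have hmass : ∀ v ∈ Ioi (0 : ℝ), π ^ ((finrank ℝ V : ℝ) / 2) * rexp (-(t ^ 2) * v ^ 2) =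
      ∫ x : V, ‖v ^ finrank ℝ V * rexp (-((‖x‖ ^ 2 + t ^ 2) * v ^ 2))‖ := fun v (hv : 0 < v) => by
    have hgauss := GaussianFourier.integral_rexp_neg_mul_sq_norm (V := V) (pow_pos hv 2)
    simp only [neg_mul] at hgauss ⊢
    simp only [Real.norm_of_nonneg (mul_nonneg (pow_nonneg hv.le _) (Real.exp_nonneg _))]
    simp only [hslice]
    rw [integral_const_mul, hgauss, rpow_div_sq_eq hv Real.pi_nonneg]
    field_simp
  refine (integrable_prod_iff' (by fun_prop)).2 ⟨?_, ?_⟩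
  · filter_upwards [ae_restrict_mem measurableSet_Ioi] with v hv
    simp only [Function.uncurry, hslice]
    exact (integrable_exp_neg_mul_sq_norm (pow_pos hv 2)).const_mul _
  · refine Integrable.congr ?_ ((ae_restrict_mem measurableSet_Ioi).mono hmass)
    exact ((integrable_exp_neg_mul_sq (pow_pos ht 2)).const_mul _).integrableOn

lemma integrable_sq_norm_add_sq_rpow {t : ℝ} (ht : 0 < t) :
    Integrable fun x : V => (‖x‖ ^ 2 + t ^ 2) ^ (-(((finrank ℝ V : ℝ) + 1) / 2)) := by
  have h := (integrable_pow_mul_exp_neg_mul_sq V ht).integral_prod_left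
  simp only [Function.uncurry] at h
  have hq (x : V) : 0 < ‖x‖ ^ 2 + t ^ 2 := by positivity
  simp only [integral_Ioi_pow_mul_exp_neg_mul_sq (hq _)] at h
  exact (integrable_const_mul_iff (by positivity : Real.Gamma _ / 2 ≠ 0).isUnit _).1 h

end

lemma fourier_pow_mul_exp_neg_mul_sq {v : ℝ} (hv : 0 < v) (t : ℝ) (ξ : V) :
    𝓕 (fun x : V => ((v ^ finrank ℝ V * rexp (-((‖x‖ ^ 2 + t ^ 2) * v ^ 2)) : ℝ) : ℂ)) ξ =
      (π ^ ((finrank ℝ V : ℝ) / 2) * rexp (-(t ^ 2 * v ^ 2 + (π * ‖ξ‖) ^ 2 / v ^ 2)) : ℝ) := by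
  have hsplit (x : V) :
      ((v ^ finrank ℝ V * rexp (-((‖x‖ ^ 2 + t ^ 2) * v ^ 2)) : ℝ) : ℂ) =
        ((v ^ finrank ℝ V * rexp (-(t ^ 2 * v ^ 2)) : ℝ) : ℂ) •
          (rexp (-(v ^ 2 * ‖x‖ ^ 2)) : ℂ) := by
    rw [smul_eq_mul, ← Complex.ofReal_mul, mul_assoc, ← Real.exp_add]
    ring_nf
  simp only [hsplit]
  rw [fourier_const_smul, fourier_exp_neg_sq_mul_sq_norm hv, smul_eq_mul, ← Complex.ofReal_mul,
    neg_add, Real.exp_add]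
  congr 1
  field_simp

lemma fourier_sq_norm_add_sq_rpow {t : ℝ} (ht : 0 < t) (ξ : V) :
    𝓕 (fun x : V => (((‖x‖ ^ 2 + t ^ 2) ^ (-(((finrank ℝ V : ℝ) + 1) / 2)) : ℝ) : ℂ)) ξ =
      (π ^ (((finrank ℝ V : ℝ) + 1) / 2) / (Real.Gamma (((finrank ℝ V : ℝ) + 1) / 2) * t) *
        rexp (-(2 * π * ‖ξ‖ * t)) : ℝ) := by
  have hq (x : V) : 0 < ‖x‖ ^ 2 + t ^ 2 := by positivity
  have hswap := fourier_integral_eq_integral_fourier (μ := volume.restrict (Ioi (0 : ℝ)))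
    (K := fun (x : V) v => ((v ^ finrank ℝ V * rexp (-((‖x‖ ^ 2 + t ^ 2) * v ^ 2)) : ℝ) : ℂ))
    (integrable_pow_mul_exp_neg_mul_sq V ht).ofReal ξ
  rw [setIntegral_congr_fun measurableSet_Ioi fun v hv => fourier_pow_mul_exp_neg_mul_sq hv t ξ,
    integral_complex_ofReal, integral_const_mul,
    integral_Ioi_exp_neg_mul_sq_add_div_sq ht (by positivity)] at hswap
  simp only [integral_complex_ofReal, integral_Ioi_pow_mul_exp_neg_mul_sq (hq _),
    Complex.ofReal_mul (Real.Gamma _ / 2)] at hswap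
  have hscaled := (fourier_const_smul _ _ ξ).symm.trans hswap
  have hΓ : 0 < Real.Gamma (((finrank ℝ V : ℝ) + 1) / 2) := Real.Gamma_pos_of_pos (by positivity)
  rw [← mul_right_inj' (Complex.ofReal_ne_zero.2 (half_pos hΓ).ne'), ← smul_eq_mul, hscaled,
    ← Complex.ofReal_mul, add_div, Real.rpow_add Real.pi_pos, ← Real.sqrt_eq_rpow]
  congr 1
  field_simp

end Subordination

section NormDerivative

variable {V : Type*} [NormedAddCommGroup V] [InnerProductSpace ℝ V]

lemma hasFDerivAt_norm_of_ne_zero {x : V} (hx : x ≠ 0) :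
    HasFDerivAt (fun y : V => ‖y‖) (‖x‖⁻¹ • innerSL ℝ x) x := by
  have h := (hasStrictFDerivAt_norm_sq x).hasFDerivAt.sqrt (by positivity)
  simp only [Real.sqrt_sq (norm_nonneg _)] at h
  refine h.congr_fderiv ?_
  ext v
  simp only [smul_apply, coe_innerSL_apply, nsmul_eq_mul, Nat.cast_ofNat, smul_eq_mul]
  field_simp

lemma hasFDerivAt_inner_mul_exp_neg_mul_norm (v : V) (s : ℝ) {x : V} (hx : x ≠ 0) :
    HasFDerivAt (fun y : V => ⟪v, y⟫ * rexp (-(s * ‖y‖)))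
      (rexp (-(s * ‖x‖)) • (innerSL ℝ v - (s * ⟪v, x⟫ / ‖x‖) • innerSL ℝ x)) x := by
  have hexp := ((hasFDerivAt_norm_of_ne_zero hx).const_mul s).neg.exp
  refine ((innerSL ℝ v).hasFDerivAt.mul hexp).congr_fderiv ?_
  ext w
  simp only [coe_innerSL_apply, Pi.neg_apply, smul_neg, add_apply, neg_apply, smul_apply,
    smul_eq_mul, sub_apply]
  ring

end NormDerivative

section PoissonKernel

variable {d : ℕ}

lemma sphereVol_eq (d : ℕ) :
    sphereVol d = 2 * π ^ (((d : ℝ) + 1) / 2) / Real.Gamma (((d : ℝ) + 1) / 2) := by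
  have hhalf : ((d : ℝ) + 1) / 2 ≠ 0 := by positivity
  rw [sphereVol, EuclideanSpace.volume_ball, Fintype.card_fin, ENNReal.ofReal_one, one_pow,
    one_mul, ENNReal.toReal_ofReal (by positivity), Nat.cast_add_one, Real.Gamma_add_one hhalf,
    Real.sqrt_eq_rpow, ← Real.rpow_mul_natCast Real.pi_nonneg]
  push_cast
  field_simp

lemma sphereVol_pos (d : ℕ) : 0 < sphereVol d := by
  rw [sphereVol_eq]
  have := Real.Gamma_pos_of_pos (show 0 < ((d : ℝ) + 1) / 2 by positivity)
  positivity

lemma poissonKernelEd_eq (t : ℝ) (x : Ed d) :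
    poissonKernelEd d t x =
      2 / sphereVol d * t * (‖x‖ ^ 2 + t ^ 2) ^ (-(((d : ℝ) + 1) / 2)) := by
  rw [poissonKernelEd, Real.rpow_neg (by positivity), div_eq_mul_inv]

lemma poissonKernelEd_nonneg {t : ℝ} (ht : 0 ≤ t) (x : Ed d) : 0 ≤ poissonKernelEd d t x := by
  have := (sphereVol_pos d).le
  unfold poissonKernelEd
  positivity

lemma integrable_poissonKernelEd {t : ℝ} (ht : 0 < t) : Integrable (poissonKernelEd d t) := by
  have h := integrable_sq_norm_add_sq_rpow (Ed d) ht
  rw [finrank_euclideanSpace_fin] at h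
  exact (h.const_mul _).congr (Eventually.of_forall fun x => (poissonKernelEd_eq t x).symm)

lemma hasFDerivAt_poissonKernelEd {t : ℝ} (ht : t ≠ 0) (x : Ed d) :
    HasFDerivAt (poissonKernelEd d t)
      (-((d + 1) * poissonKernelEd d t x / (‖x‖ ^ 2 + t ^ 2)) • innerSL ℝ x) x := by
  have hq : 0 < ‖x‖ ^ 2 + t ^ 2 := by positivity
  have h := (((hasStrictFDerivAt_norm_sq x).hasFDerivAt.add_const (t ^ 2)).rpow_const
    (p := -(((d : ℝ) + 1) / 2)) (Or.inl hq.ne')).const_mul (2 / sphereVol d * t)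
  rw [funext (poissonKernelEd_eq (d := d) t)]
  refine h.congr_fderiv ?_
  ext v
  simp only [Real.rpow_sub_one hq.ne', smul_apply, coe_innerSL_apply, nsmul_eq_mul,
    Nat.cast_ofNat, smul_eq_mul, neg_smul, neg_apply]
  ring

lemma pEntry_eq {t : ℝ} (ht : t ≠ 0) (j k : Fin (d + 1)) (x : Ed d) :
    pEntry d t j k x = (d + 1) * poissonKernelEd d t x / (‖x‖ ^ 2 + t ^ 2) *
      (snocVec d x t j * snocVec d x t k) := by
  have hq : 0 < ‖x‖ ^ 2 + t ^ 2 := by positivity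
  rw [pEntry, poissonKernelEd, show ((d : ℝ) + 3) / 2 = (d + 1) / 2 + 1 by ring,
    Real.rpow_add_one hq.ne']
  field_simp

lemma pEntry_castSucc {t : ℝ} (ht : t ≠ 0) (i : Fin (d + 1)) (k : Fin d) (x : Ed d) :
    pEntry d t i k.castSucc x =
      -(snocVec d x t i * fderiv ℝ (poissonKernelEd d t) x (EuclideanSpace.single k 1)) := by
  have hk : snocVec d x t k.castSucc = x k := Fin.snoc_castSucc ..
  rw [pEntry_eq ht, (hasFDerivAt_poissonKernelEd ht x).fderiv, hk]
  simp only [neg_smul, neg_apply, smul_apply, coe_innerSL_apply,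
    EuclideanSpace.inner_single_right, Real.ringHom_apply, one_mul, smul_eq_mul]
  ring

lemma sq_snocVec_le (x : Ed d) (t : ℝ) (i : Fin (d + 1)) :
    snocVec d x t i ^ 2 ≤ ‖x‖ ^ 2 + t ^ 2 := by
  induction i using Fin.lastCases with
  | last => simp [snocVec]
  | cast i =>
    have h : x i ^ 2 ≤ ‖x‖ ^ 2 := sq_le_sq.2 ((PiLp.norm_apply_le x i).trans (le_abs_self _))
    simpa [snocVec] using h.trans (le_add_of_nonneg_right (sq_nonneg t))

lemma abs_pEntry_le {t : ℝ} (ht : 0 < t) (j k : Fin (d + 1)) (x : Ed d) :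
    |pEntry d t j k x| ≤ (d + 1) * poissonKernelEd d t x := by
  have hq : 0 < ‖x‖ ^ 2 + t ^ 2 := by positivity
  have hp := poissonKernelEd_nonneg ht.le x
  have hsnoc (i : Fin (d + 1)) : |snocVec d x t i| ≤ √(‖x‖ ^ 2 + t ^ 2) :=
    Real.abs_le_sqrt (sq_snocVec_le x t i)
  have hjk : |snocVec d x t j * snocVec d x t k| ≤ ‖x‖ ^ 2 + t ^ 2 := by
    rw [abs_mul, ← Real.mul_self_sqrt hq.le]
    exact mul_le_mul (hsnoc j) (hsnoc k) (abs_nonneg _) (Real.sqrt_nonneg _)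
  rw [pEntry_eq ht.ne', abs_mul, abs_of_nonneg (by positivity)]
  calc _ ≤ (d + 1) * poissonKernelEd d t x / (‖x‖ ^ 2 + t ^ 2) * (‖x‖ ^ 2 + t ^ 2) := by gcongr
    _ = _ := div_mul_cancel₀ _ hq.ne'

lemma integrable_pEntry {t : ℝ} (ht : 0 < t) (j k : Fin (d + 1)) :
    Integrable (pEntry d t j k) := by
  refine ((integrable_poissonKernelEd ht).const_mul (d + 1 : ℝ)).mono' ?_
    (Eventually.of_forall (abs_pEntry_le ht j k))
  have hsnoc (i : Fin (d + 1)) : Measurable fun x : Ed d => snocVec d x t i := by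
    induction i using Fin.lastCases with
    | last => simp [snocVec]
    | cast i => simpa [snocVec] using by fun_prop
  have := hsnoc j
  have := hsnoc k
  unfold pEntry
  exact (by fun_prop : Measurable _).aestronglyMeasurable

lemma norm_fderiv_poissonKernelEd {t : ℝ} (ht : 0 < t) (x : Ed d) :
    ‖fderiv ℝ (poissonKernelEd d t) x‖ =
      (d + 1) * poissonKernelEd d t x / (‖x‖ ^ 2 + t ^ 2) * ‖x‖ := by
  have hp := poissonKernelEd_nonneg ht.le x
  rw [(hasFDerivAt_poissonKernelEd ht.ne' x).fderiv, norm_smul, innerSL_apply_norm, norm_neg,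
    Real.norm_of_nonneg (by positivity)]

lemma integrable_fderiv_poissonKernelEd {t : ℝ} (ht : 0 < t) :
    Integrable (fderiv ℝ (poissonKernelEd d t)) := by
  refine ((integrable_poissonKernelEd ht).const_mul ((d + 1) / t : ℝ)).mono'
    (measurable_fderiv ℝ _).aestronglyMeasurable (Eventually.of_forall fun x => ?_)
  have hp := poissonKernelEd_nonneg ht.le x
  rw [norm_fderiv_poissonKernelEd ht, div_mul_eq_mul_div, div_mul_eq_mul_div,
    div_le_div_iff₀ (by positivity) ht, mul_assoc]
  gcongr
  nlinarith [sq_nonneg (‖x‖ - t)]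

lemma integrable_norm_mul_fderiv_poissonKernelEd_apply {t : ℝ} (ht : 0 < t) (v : Ed d) :
    Integrable fun x => ‖x‖ * ‖fderiv ℝ (poissonKernelEd d t) x v‖ := by
  refine ((integrable_poissonKernelEd ht).const_mul ((d + 1) * ‖v‖ : ℝ)).mono'
    (by have := measurable_fderiv_apply_const ℝ (poissonKernelEd d t) v; fun_prop)
    (Eventually.of_forall fun x => ?_)
  have hp := poissonKernelEd_nonneg ht.le x
  have hq : 0 < ‖x‖ ^ 2 + t ^ 2 := by positivity
  have hweight : ‖x‖ * ‖fderiv ℝ (poissonKernelEd d t) x‖ ≤ (d + 1) * poissonKernelEd d t x := by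
    rw [norm_fderiv_poissonKernelEd ht, mul_left_comm, div_mul_eq_mul_div, div_le_iff₀ hq]
    gcongr
    nlinarith [sq_nonneg t]
  rw [Real.norm_of_nonneg (by positivity)]
  calc ‖x‖ * ‖fderiv ℝ (poissonKernelEd d t) x v‖
      ≤ ‖x‖ * (‖fderiv ℝ (poissonKernelEd d t) x‖ * ‖v‖) := by
        gcongr
        exact ContinuousLinearMap.le_opNorm _ v
    _ ≤ (d + 1) * poissonKernelEd d t x * ‖v‖ := by
        rw [← mul_assoc]
        gcongr
    _ = (d + 1) * ‖v‖ * poissonKernelEd d t x := mul_right_comm _ _ _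

lemma ftR_eq_fourier (g : Ed d → ℝ) : ftR d g = 𝓕 (fun x => (g x : ℂ)) := by
  ext ξ
  simp only [ftR, Real.fourier_eq', smul_eq_mul, real_inner_comm]

lemma ftR_neg (g : Ed d → ℝ) (ξ : Ed d) : ftR d (fun x => -g x) ξ = -ftR d g ξ := by
  simp only [ftR, Complex.ofReal_neg, mul_neg, integral_neg]

lemma ftR_const_mul (c : ℝ) (g : Ed d → ℝ) (ξ : Ed d) :
    ftR d (fun x => c * g x) ξ = c * ftR d g ξ := by
  simp only [ftR, Complex.ofReal_mul, mul_left_comm _ (c : ℂ), integral_const_mul]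

lemma ftR_fderiv_apply {g : Ed d → ℝ} (hg : Integrable g) (hdiff : Differentiable ℝ g)
    (hg' : Integrable (fderiv ℝ g)) (v ξ : Ed d) :
    ftR d (fun x => fderiv ℝ g x v) ξ = 2 * π * Complex.I * ⟪v, ξ⟫ * ftR d g ξ := by
  have hderiv : fderiv ℝ (fun x => (g x : ℂ)) = fun x => Complex.ofRealCLM.comp (fderiv ℝ g x) :=
    funext fun x => (Complex.ofRealCLM.hasFDerivAt.comp x (hdiff x).hasFDerivAt).fderiv
  have hint : Integrable (fderiv ℝ fun x => (g x : ℂ)) := by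
    rw [hderiv]
    exact (ContinuousLinearMap.compL ℝ (Ed d) ℝ ℂ Complex.ofRealCLM).integrable_comp hg'
  have h := fourier_fderiv_apply (f := fun x => (g x : ℂ)) hg.ofReal
    (Complex.ofRealCLM.differentiable.comp hdiff) hint v ξ
  rw [hderiv, smul_eq_mul, ← ftR_eq_fourier] at h
  rwa [ftR_eq_fourier (fun x => fderiv ℝ g x v)]

lemma ftR_inner_mul {g : Ed d → ℝ} (hg : Integrable g) (hg' : Integrable fun x => ‖x‖ * ‖g x‖)
    (v ξ : Ed d) :
    ftR d (fun x => ⟪v, x⟫ * g x) ξ = Complex.I / (2 * π) * fderiv ℝ (ftR d g) ξ v := by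
  have h := fourier_inner_smul (f := fun x => (g x : ℂ)) hg.ofReal (by simpa using hg') v ξ
  simpa only [ftR_eq_fourier, Complex.ofReal_mul, Complex.real_smul, smul_eq_mul] using h

lemma ftR_poissonKernelEd {t : ℝ} (ht : 0 < t) (ξ : Ed d) :
    ftR d (poissonKernelEd d t) ξ = rexp (-(2 * π * ‖ξ‖ * t)) := by
  have : 0 < Real.Gamma (((d : ℝ) + 1) / 2) := Real.Gamma_pos_of_pos (by positivity)
  have h := fourier_sq_norm_add_sq_rpow ht ξ
  rw [finrank_euclideanSpace_fin, ← ftR_eq_fourier] at h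
  rw [funext (poissonKernelEd_eq (d := d) t), ftR_const_mul, h, sphereVol_eq, ← Complex.ofReal_mul]
  congr 1
  field_simp

lemma ftR_fderiv_poissonKernelEd {t : ℝ} (ht : 0 < t) (v ξ : Ed d) :
    ftR d (fun x => fderiv ℝ (poissonKernelEd d t) x v) ξ =
      2 * π * Complex.I * (⟪v, ξ⟫ * rexp (-(2 * π * t * ‖ξ‖)) : ℝ) := by
  rw [ftR_fderiv_apply (integrable_poissonKernelEd ht)
    (fun x => (hasFDerivAt_poissonKernelEd ht.ne' x).differentiableAt)
    (integrable_fderiv_poissonKernelEd ht), ftR_poissonKernelEd ht, mul_right_comm _ ‖ξ‖ t]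
  push_cast
  ring

lemma hasFDerivAt_ftR_fderiv_poissonKernelEd {t : ℝ} (ht : 0 < t) (v : Ed d) {ξ : Ed d}
    (hξ : ξ ≠ 0) :
    HasFDerivAt (ftR d fun x => fderiv ℝ (poissonKernelEd d t) x v)
      ((2 * π * Complex.I) • Complex.ofRealCLM.comp (rexp (-(2 * π * t * ‖ξ‖)) •
        (innerSL ℝ v - (2 * π * t * ⟪v, ξ⟫ / ‖ξ‖) • innerSL ℝ ξ))) ξ := by
  rw [funext (ftR_fderiv_poissonKernelEd ht v)]
  exact (Complex.ofRealCLM.hasFDerivAt.comp ξ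
    (hasFDerivAt_inner_mul_exp_neg_mul_norm v (2 * π * t) hξ)).const_mul _

lemma ftR_pEntry_last {t : ℝ} (ht : 0 < t) (k : Fin d) (ξ : Ed d) :
    ftR d (pEntry d t (Fin.last d) k.castSucc) ξ =
      -2 * π * Complex.I * t * rexp (-(2 * π * ‖ξ‖ * t)) * ξ k := by
  have hlast (x : Ed d) : snocVec d x t (Fin.last d) = t := Fin.snoc_last ..
  simp only [funext (pEntry_castSucc ht.ne' _ k), hlast]
  rw [ftR_neg, ftR_const_mul, ftR_fderiv_poissonKernelEd ht, mul_right_comm _ ‖ξ‖ t,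
    EuclideanSpace.inner_single_left, Real.ringHom_apply]
  push_cast
  ring

lemma ftR_pEntry_castSucc {t : ℝ} (ht : 0 < t) (j k : Fin d) {ξ : Ed d} (hξ : ξ ≠ 0) :
    ftR d (pEntry d t j.castSucc k.castSucc) ξ =
      rexp (-(2 * π * ‖ξ‖ * t)) * (if j = k then 1 else 0) -
        2 * π * t * rexp (-(2 * π * ‖ξ‖ * t)) * ξ j * ξ k / ‖ξ‖ := by
  have hj (x : Ed d) : snocVec d x t j.castSucc = ⟪EuclideanSpace.single j 1, x⟫ := by
    simp [snocVec, EuclideanSpace.inner_single_left]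
  have hcancel (z : ℂ) : -(Complex.I / (2 * π) * ((2 * π * Complex.I) * z)) = z := by
    field_simp
    linear_combination -z * Complex.I_sq
  simp only [funext (pEntry_castSucc ht.ne' _ k), hj]
  rw [ftR_neg, ftR_inner_mul
    ((integrable_fderiv_poissonKernelEd ht).apply_continuousLinearMap _)
    (integrable_norm_mul_fderiv_poissonKernelEd_apply ht _),
    (hasFDerivAt_ftR_fderiv_poissonKernelEd ht _ hξ).fderiv, smul_apply, smul_eq_mul, hcancel,
    mul_right_comm _ ‖ξ‖ t]
  simp only [ContinuousLinearMap.comp_apply, Complex.ofRealCLM_apply, smul_apply, sub_apply,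
    coe_innerSL_apply, EuclideanSpace.inner_single_left, EuclideanSpace.inner_single_right,
    Real.ringHom_apply, PiLp.single_apply, smul_eq_mul, one_mul]
  split_ifs <;> push_cast <;> ring

lemma ftR_pConv {t : ℝ} (ht : 0 < t) {F : Ed d → Ed (d + 1)} (hF : Integrable F)
    (i : Fin (d + 1)) (ξ : Ed d) :
    ftR d (fun x => pConv d t F x i) ξ =
      ∑ k, ftR d (pEntry d t i k) ξ * ftR d (fun x => F x k) ξ := by
  have hconv (x : Ed d) : (pConv d t F x i : ℂ) =
      ∫ y, ∑ k, (pEntry d t i k y : ℂ) * (F (x - y) k : ℂ) := by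
    rw [show pConv d t F x i = ∫ y, ∑ k, pEntry d t i k y * F (x - y) k from rfl,
      ← integral_complex_ofReal]
    push_cast
    rfl
  simp only [ftR_eq_fourier, hconv]
  exact fourier_integral_sum_mul (fun k => (integrable_pEntry ht i k).ofReal)
    (fun k => ((EuclideanSpace.proj (𝕜 := ℝ) k).integrable_comp hF).ofReal) ξ

lemma integrable_appendZero {f : Ed d → Ed d} (hf : Integrable f) :
    Integrable (appendZero d f) := by
  refine (EuclideanSpace.equiv (Fin (d + 1)) ℝ).symm.integrable_comp_iff.2 ?_
  refine Integrable.of_eval fun k => ?_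
  induction k using Fin.lastCases with
  | last => simp
  | cast k => simpa using (EuclideanSpace.proj (𝕜 := ℝ) k).integrable_comp hf

lemma ftR_pConv_appendZero {t : ℝ} (ht : 0 < t) {f : Ed d → Ed d} (hf : Integrable f)
    (i : Fin (d + 1)) (ξ : Ed d) :
    ftR d (fun x => pConv d t (appendZero d f) x i) ξ =
      ∑ k : Fin d, ftR d (pEntry d t i k.castSucc) ξ * ftR d (fun x => f x k) ξ := by
  have hcast (k : Fin d) (x : Ed d) : appendZero d f x k.castSucc = f x k := by
    simp [appendZero]
  have hlast (x : Ed d) : appendZero d f x (Fin.last d) = 0 := by simp [appendZero]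
  have hzero : ftR d (fun _ => 0) ξ = 0 := by simp [ftR]
  simp only [ftR_pConv ht (integrable_appendZero hf), Fin.sum_univ_castSucc, hcast, hlast, hzero,
    mul_zero, add_zero]

end PoissonKernel

theorem pConv_fourier_transform_general {d : ℕ} {f : Ed d → Ed d} (hf : Integrable f) {t : ℝ}
    (ht : 0 < t) {ξ : Ed d} (hξ : ξ ≠ 0) :
    (∀ j : Fin d,
      ftR d (fun x => pConv d t (appendZero d f) x j.castSucc) ξ =
        ((rexp (-(2 * π * ‖ξ‖ * t)) : ℝ) : ℂ) * ftR d (fun x => f x j) ξ -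
          ((2 * π * t * rexp (-(2 * π * ‖ξ‖ * t)) : ℝ) : ℂ) * ((ξ j : ℝ) : ℂ) *
            ((∑ k : Fin d, ((ξ k : ℝ) : ℂ) * ftR d (fun x => f x k) ξ) / ((‖ξ‖ : ℝ) : ℂ))) ∧
    ftR d (fun x => pConv d t (appendZero d f) x (Fin.last d)) ξ =
      -2 * π * Complex.I * (t : ℂ) * ((rexp (-(2 * π * ‖ξ‖ * t)) : ℝ) : ℂ) *
        (∑ k : Fin d, ((ξ k : ℝ) : ℂ) * ftR d (fun x => f x k) ξ) := by
  refine ⟨fun j => ?_, ?_⟩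
  · rw [ftR_pConv_appendZero ht hf, Finset.sum_congr rfl fun k _ =>
      congrArg (· * ftR d (fun x => f x k) ξ) (ftR_pEntry_castSucc ht j k hξ)]
    simp only [sub_mul, Finset.sum_sub_distrib, mul_ite, mul_one, mul_zero, ite_mul, zero_mul,
      Finset.sum_ite_eq, Finset.mem_univ, if_true]
    rw [Finset.sum_div, Finset.mul_sum]
    congr 1
    refine Finset.sum_congr rfl fun k _ => ?_
    push_cast
    ring
  · simp only [ftR_pConv_appendZero ht hf, ftR_pEntry_last ht, Finset.mul_sum, mul_assoc]

end

/-- **Fourier transform of the Poisson-type integral.** If `f` is a Schwartz vector field,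
`F = (f,0)` and `U(·,t) = ℙ_t ∗ F`, then for `t > 0` and `ξ ≠ 0`:
(i) for `j = 1,…,d`,
`ℱ_x(U_j(·,t))(ξ) = e^{−2π|ξ|t} ℱ(f_j)(ξ) − 2πt e^{−2π|ξ|t} ξ_j (ξ·ℱ(f)(ξ))/|ξ|`, and
(ii) `ℱ_x(U_{d+1}(·,t))(ξ) = −2πi t e^{−2π|ξ|t} (ξ·ℱ(f)(ξ))`. -/
theorem pConv_fourier_transform (d : ℕ)
    (f : SchwartzMap (Ed d) (Ed d)) (t : ℝ) (ht : 0 < t) (ξ : Ed d) (hξ : ξ ≠ 0) :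
    (∀ j : Fin d,
      ftR d (fun x => pConv d t (appendZero d (fun y => f y)) x j.castSucc) ξ =
        ((Real.exp (-(2 * Real.pi * ‖ξ‖ * t)) : ℝ) : ℂ) * ftR d (fun x => f x j) ξ -
          ((2 * Real.pi * t * Real.exp (-(2 * Real.pi * ‖ξ‖ * t)) : ℝ) : ℂ) *
            ((ξ j : ℝ) : ℂ) *
            ((∑ k : Fin d, ((ξ k : ℝ) : ℂ) * ftR d (fun x => f x k) ξ) / ((‖ξ‖ : ℝ) : ℂ))) ∧
    ftR d (fun x => pConv d t (appendZero d (fun y => f y)) x (Fin.last d)) ξ =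
      -2 * Real.pi * Complex.I * (t : ℂ) *
        ((Real.exp (-(2 * Real.pi * ‖ξ‖ * t)) : ℝ) : ℂ) *
        (∑ k : Fin d, ((ξ k : ℝ) : ℂ) * ftR d (fun x => f x k) ξ) :=
  pConv_fourier_transform_general f.integrable ht hξ
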